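/- For every τ in the complex upper half-plane ℍ, one has E_odd(τ) = η(4τ)⁸/η(2τ)⁴. -/

import Mathlib

noncomputable section
open Complex Real

/-- `q = e^{2πiτ}`. -/
def nome (τ : ℂ) : ℂ := Complex.exp (2 * (π : ℂ) * I * τ)

/-- Dedekind eta function `η(τ) = e^{πiτ/12} ∏_{n≥1} (1 − qⁿ)`. -/
def dedekindEta (τ : ℂ) : ℂ :=
  Complex.exp ((π : ℂ) * I * τ / 12) * ∏' n : ℕ, (1 - nome τ ^ (n + 1))

/-- `E_odd(τ) = Σ_{n≥0} σ₁(2n+1) q^{2n+1}`, where `σ₁(m)` is the sum of divisors of `m`. -/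
def Eodd (τ : ℂ) : ℂ :=
  ∑' n : ℕ, ((∑ d ∈ (2 * n + 1).divisors, d : ℕ) : ℂ) * nome τ ^ (2 * n + 1)

/-!
With `x = q²` and `J(u) = u + u⁻¹`, the partial fraction expansion of
`∏_{k<N} (z - J(x^{2k+2})) / ∏_{m≤N} (z - J(x^{2m+1}))` at `z = 2 = J(1)` has residues and value
that factor into quantities `1 - xⁿ`, because a difference `J(u) - J(v)` does. As `N → ∞` it becomes
`∑ x^m (1 + x^{2m+1}) / (1 - x^{2m+1})² = φ(x²)⁸ / φ(x)⁴` with `φ` Euler's function, and expanding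
each summand as a power series in `q` collects the sums of divisors of the odd numbers.
-/

section PartialFractions

open Lagrange

variable {K ι κ : Type*} [Field K] [DecidableEq ι]

lemma prod_sub_div_prod_sub_eq_sum {s : Finset ι} {t : Finset κ} {v : ι → K} (e : κ → K) {z : K}
    (hv : Set.InjOn v s) (hst : t.card < s.card) (hz : ∀ i ∈ s, z ≠ v i) :
    (∏ k ∈ t, (z - e k)) / ∏ i ∈ s, (z - v i) =
      ∑ i ∈ s, (∏ k ∈ t, (v i - e k)) / (∏ j ∈ s.erase i, (v i - v j)) / (z - v i) := by
  have hdeg : (nodal t e).degree < s.card := by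
    rw [degree_nodal]
    exact_mod_cast hst
  have hinterp := congrArg (Polynomial.eval z) (eq_interpolate hv hdeg)
  rw [eval_interpolate_not_at_node _ hz, eval_nodal] at hinterp
  rw [hinterp, ← eval_nodal, mul_div_cancel_left₀ _ (eval_nodal_not_at_node hz)]
  refine Finset.sum_congr rfl fun i _ ↦ ?_
  rw [nodalWeight, Finset.prod_inv_distrib, eval_nodal]
  ring

end PartialFractions

lemma prod_erase_range_add {M : Type*} [CommMonoid M] (f : ℕ → M) (m r : ℕ) :
    ∏ j ∈ (Finset.range (m + r + 1)).erase m, f j =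
      (∏ j ∈ Finset.range m, f j) * ∏ i ∈ Finset.range r, f (m + 1 + i) := by
  have hsplit : (Finset.range (m + r + 1)).erase m =
      Finset.range m ∪ (Finset.range r).map (addLeftEmbedding (m + 1)) := by
    ext j
    simp only [Finset.mem_erase, Finset.mem_range, Finset.mem_union, Finset.mem_map,
      addLeftEmbedding_apply]
    refine ⟨fun h ↦ ?_, by grind⟩
    rcases lt_or_gt_of_ne h.1 with hj | hj
    · exact .inl hj
    · exact .inr ⟨j - (m + 1), by omega, by omega⟩
  rw [hsplit, Finset.prod_union, Finset.prod_map]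
  · rfl
  · simp only [Finset.disjoint_left, Finset.mem_range, Finset.mem_map, addLeftEmbedding_apply]
    grind

section FiniteIdentity

variable {K : Type*} [Field K] {x : K}

lemma one_sub_pow_ne_zero (hx : ¬IsOfFinOrder x) {n : ℕ} (hn : n ≠ 0) : 1 - x ^ n ≠ 0 :=
  fun h ↦ hx (isOfFinOrder_iff_pow_eq_one.2 ⟨n, Nat.pos_of_ne_zero hn, (sub_eq_zero.1 h).symm⟩)

/-- The ratio `(x; x²)_n / (x²; x²)_n` of `q`-Pochhammer symbols, in which the residues of the
partial fraction expansion are expressed. -/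
def pochhammerRatio (x : K) (n : ℕ) : K :=
  ∏ i ∈ Finset.range n, (1 - x ^ (2 * i + 1)) / (1 - x ^ (2 * i + 2))

lemma pochhammerRatio_zero (x : K) : pochhammerRatio x 0 = 1 := rfl

lemma pochhammerRatio_succ (x : K) (n : ℕ) : pochhammerRatio x (n + 1) =
    pochhammerRatio x n * ((1 - x ^ (2 * n + 1)) / (1 - x ^ (2 * n + 2))) :=
  Finset.prod_range_succ _ _

lemma pochhammerRatio_ne_zero (hx : ¬IsOfFinOrder x) (n : ℕ) : pochhammerRatio x n ≠ 0 :=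
  Finset.prod_ne_zero_iff.2 fun i _ ↦
    div_ne_zero (one_sub_pow_ne_zero hx (by omega)) (one_sub_pow_ne_zero hx (by omega))

lemma pochhammerRatio_eq_div (hx : ¬IsOfFinOrder x) (n : ℕ) :
    pochhammerRatio x n = (∏ i ∈ Finset.range (2 * n), (1 - x ^ (i + 1))) /
      (∏ i ∈ Finset.range n, (1 - (x ^ 2) ^ (i + 1))) ^ 2 := by
  induction n with
  | zero => simp [pochhammerRatio_zero]
  | succ n ih =>
    have hne := one_sub_pow_ne_zero hx (n := 2 * n + 2) (by omega)
    rw [pochhammerRatio_succ, ih, mul_add_one 2 n, Finset.prod_range_succ,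
      Finset.prod_range_succ _ (2 * n), Finset.prod_range_succ _ n, ← pow_mul x 2 (n + 1),
      mul_add_one 2 n]
    field_simp

/-- The Joukowski map `u ↦ u + u⁻¹`; the nodes and zeros of the partial fraction expansion are its
values at powers of `x`. -/
def joukowski (u : K) : K := u + u⁻¹

lemma joukowski_pow_sub_joukowski_pow_add (hx0 : x ≠ 0) (a d : ℕ) :
    joukowski (x ^ a) - joukowski (x ^ (a + d)) =
      -((1 - x ^ d) * (1 - x ^ (2 * a + d)) / x ^ (a + d)) := by
  simp only [joukowski, pow_add, two_mul]
  field_simp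
  ring

lemma joukowski_pow_add_sub_joukowski_pow (hx0 : x ≠ 0) (a d : ℕ) :
    joukowski (x ^ (a + d)) - joukowski (x ^ a) =
      (1 - x ^ d) * (1 - x ^ (2 * a + d)) / x ^ (a + d) := by
  rw [← neg_sub, joukowski_pow_sub_joukowski_pow_add hx0, neg_neg]

lemma joukowski_pow_injective (hx0 : x ≠ 0) (hx : ¬IsOfFinOrder x) :
    Function.Injective fun n : ℕ ↦ joukowski (x ^ n) := by
  refine Function.Injective.of_lt_imp_ne fun a b hab ↦ ?_
  obtain ⟨d, rfl⟩ := Nat.exists_eq_add_of_le hab.le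
  rw [← sub_ne_zero, joukowski_pow_sub_joukowski_pow_add hx0]
  exact neg_ne_zero.2 (div_ne_zero (mul_ne_zero (one_sub_pow_ne_zero hx (by omega))
    (one_sub_pow_ne_zero hx (by omega))) (pow_ne_zero _ hx0))

lemma pochhammerRatio_mul_prod_range (x : K) (m n : ℕ) :
    pochhammerRatio x m * (1 - x ^ (2 * m + 1)) *
        ∏ k ∈ Finset.range n, (1 - x ^ (2 * (m + k) + 3)) / (1 - x ^ (2 * (m + k) + 2)) =
      pochhammerRatio x (m + n) * (1 - x ^ (2 * (m + n) + 1)) := by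
  induction n with
  | zero => simp
  | succ n ih =>
    rw [Finset.prod_range_succ, ← mul_assoc, ih, ← add_assoc, pochhammerRatio_succ]
    ring

lemma joukowski_sub_div_joukowski_sub_of_lt (hx0 : x ≠ 0) {k m : ℕ} (hk : k < m) :
    (joukowski (x ^ (2 * m + 1)) - joukowski (x ^ (2 * k + 2))) /
        (joukowski (x ^ (2 * m + 1)) - joukowski (x ^ (2 * k + 1))) =
      (1 - x ^ (2 * (m - 1 - k) + 1)) / (1 - x ^ (2 * (m - 1 - k) + 2)) *
        ((1 - x ^ (2 * (m + k) + 3)) / (1 - x ^ (2 * (m + k) + 2))) := by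
  obtain ⟨t, rfl⟩ := Nat.exists_eq_add_of_lt hk
  have hnum : 2 * (k + t + 1) + 1 = 2 * k + 2 + (2 * t + 1) := by ring
  have hden : 2 * (k + t + 1) + 1 = 2 * k + 1 + (2 * t + 2) := by ring
  conv_lhs => enter [2]; rw [hden]
  rw [hnum, joukowski_pow_add_sub_joukowski_pow hx0, joukowski_pow_add_sub_joukowski_pow hx0,
    show 2 * k + 1 + (2 * t + 2) = 2 * k + 2 + (2 * t + 1) by ring,
    div_div_div_cancel_right₀ (pow_ne_zero _ hx0), mul_div_mul_comm,
    show k + t + 1 - 1 - k = t by omega]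
  ring_nf

lemma prod_range_joukowski_sub_div_joukowski_sub (hx0 : x ≠ 0) (hx : ¬IsOfFinOrder x) (m : ℕ) :
    ∏ k ∈ Finset.range m, (joukowski (x ^ (2 * m + 1)) - joukowski (x ^ (2 * k + 2))) /
        (joukowski (x ^ (2 * m + 1)) - joukowski (x ^ (2 * k + 1))) =
      pochhammerRatio x (2 * m + 1) * (1 + x ^ (2 * m + 1)) := by
  have hreflect : ∏ k ∈ Finset.range m,
      (1 - x ^ (2 * (m - 1 - k) + 1)) / (1 - x ^ (2 * (m - 1 - k) + 2)) = pochhammerRatio x m :=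
    Finset.prod_range_reflect (fun i ↦ (1 - x ^ (2 * i + 1)) / (1 - x ^ (2 * i + 2))) m
  have htelescope := pochhammerRatio_mul_prod_range x m m
  have hfactor : 1 - x ^ (2 * (2 * m) + 2) = (1 - x ^ (2 * m + 1)) * (1 + x ^ (2 * m + 1)) := by
    ring
  have hne := hfactor ▸ one_sub_pow_ne_zero hx (n := 2 * (2 * m) + 2) (by omega)
  have hminus := left_ne_zero_of_mul hne
  have hplus := right_ne_zero_of_mul hne
  rw [Finset.prod_congr rfl fun k hk ↦
      joukowski_sub_div_joukowski_sub_of_lt hx0 (Finset.mem_range.1 hk),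
    Finset.prod_mul_distrib, hreflect, pochhammerRatio_succ, hfactor]
  rw [← two_mul] at htelescope
  refine mul_right_cancel₀ hminus ?_
  rw [mul_right_comm, htelescope]
  field_simp

lemma prod_range_joukowski_sub_add_div_joukowski_sub_add (hx0 : x ≠ 0)
    (hx : ¬IsOfFinOrder x) (m r : ℕ) :
    ∏ i ∈ Finset.range r, (joukowski (x ^ (2 * m + 1)) - joukowski (x ^ (2 * (m + i) + 2))) /
        (joukowski (x ^ (2 * m + 1)) - joukowski (x ^ (2 * (m + 1 + i) + 1))) =
      x ^ r * pochhammerRatio x r * (pochhammerRatio x (2 * m + 1 + r) /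
        pochhammerRatio x (2 * m + 1)) := by
  induction r with
  | zero => simp [pochhammerRatio_zero, pochhammerRatio_ne_zero hx]
  | succ r ih =>
    rw [Finset.prod_range_succ, ih, ← add_assoc, pochhammerRatio_succ x r,
      pochhammerRatio_succ x (2 * m + 1 + r),
      show 2 * (m + r) + 2 = 2 * m + 1 + (2 * r + 1) by ring,
      show 2 * (m + 1 + r) + 1 = 2 * m + 1 + (2 * r + 2) by ring,
      joukowski_pow_sub_joukowski_pow_add hx0, joukowski_pow_sub_joukowski_pow_add hx0,
      show 2 * (2 * m + 1) + (2 * r + 1) = 2 * (2 * m + 1 + r) + 1 by ring,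
      show 2 * (2 * m + 1) + (2 * r + 2) = 2 * (2 * m + 1 + r) + 2 by ring,
      show 2 * m + 1 + (2 * r + 2) = 2 * m + 1 + (2 * r + 1) + 1 by ring,
      pow_succ x (2 * m + 1 + (2 * r + 1)), pow_succ x r]
    have hr := one_sub_pow_ne_zero hx (n := 2 * r + 2) (by omega)
    have hmr := one_sub_pow_ne_zero hx (n := 2 * (2 * m + 1 + r) + 2) (by omega)
    field_simp [pochhammerRatio_ne_zero hx]

lemma prod_joukowski_sub_div_prod_erase (hx0 : x ≠ 0) (hx : ¬IsOfFinOrder x) (m r : ℕ) :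
    (∏ k ∈ Finset.range (m + r), (joukowski (x ^ (2 * m + 1)) - joukowski (x ^ (2 * k + 2)))) /
        ∏ j ∈ (Finset.range (m + r + 1)).erase m,
          (joukowski (x ^ (2 * m + 1)) - joukowski (x ^ (2 * j + 1))) =
      x ^ r * (1 + x ^ (2 * m + 1)) * pochhammerRatio x r * pochhammerRatio x (2 * m + 1 + r) := by
  rw [prod_erase_range_add, Finset.prod_range_add, mul_div_mul_comm, ← Finset.prod_div_distrib,
    ← Finset.prod_div_distrib, prod_range_joukowski_sub_div_joukowski_sub hx0 hx,
    prod_range_joukowski_sub_add_div_joukowski_sub_add hx0 hx]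
  field_simp [pochhammerRatio_ne_zero hx (2 * m + 1)]

lemma two_sub_joukowski {u : K} (hu : u ≠ 0) : 2 - joukowski u = -((1 - u) ^ 2 / u) := by
  rw [joukowski]
  field_simp
  ring

lemma prod_two_sub_joukowski_div_prod (hx0 : x ≠ 0) (hx : ¬IsOfFinOrder x) (N : ℕ) :
    (∏ k ∈ Finset.range N, (2 - joukowski (x ^ (2 * k + 2)))) /
        ∏ m ∈ Finset.range (N + 1), (2 - joukowski (x ^ (2 * m + 1))) =
      -(x ^ (N + 1) / (pochhammerRatio x N * (1 - x ^ (2 * N + 1))) ^ 2) := by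
  simp only [two_sub_joukowski (pow_ne_zero _ hx0)]
  induction N with
  | zero => simp [pochhammerRatio_zero, div_neg]
  | succ N ih =>
    rw [Finset.prod_range_succ, Finset.prod_range_succ _ (N + 1), mul_div_mul_comm, ih,
      pochhammerRatio_succ]
    have hN := one_sub_pow_ne_zero hx (n := 2 * N + 1) (by omega)
    have hN2 := one_sub_pow_ne_zero hx (n := 2 * N + 2) (by omega)
    have hN3 := one_sub_pow_ne_zero hx (n := 2 * N + 3) (by omega)
    have hA := pochhammerRatio_ne_zero hx N
    rw [show 2 * (N + 1) + 1 = 2 * N + 3 by ring]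
    field_simp
    ring

theorem sum_mul_pochhammerRatio_mul_pochhammerRatio (hx : ¬IsOfFinOrder x) (N : ℕ) :
    ∑ m ∈ Finset.range (N + 1), x ^ m * (1 + x ^ (2 * m + 1)) / (1 - x ^ (2 * m + 1)) ^ 2 *
        pochhammerRatio x (N - m) * pochhammerRatio x (N + m + 1) =
      1 / (pochhammerRatio x N * (1 - x ^ (2 * N + 1))) ^ 2 := by
  rcases eq_or_ne x 0 with rfl | hx0
  · simp [Finset.sum_range_succ', pochhammerRatio]
  have hinj : Set.InjOn (fun m ↦ joukowski (x ^ (2 * m + 1))) (Finset.range (N + 1)) :=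
    ((joukowski_pow_injective hx0 hx).comp
      fun a b (hab : 2 * a + 1 = 2 * b + 1) ↦ by omega).injOn
  have hnode (m : ℕ) : 2 ≠ joukowski (x ^ (2 * m + 1)) := by
    rw [← sub_ne_zero, two_sub_joukowski (pow_ne_zero _ hx0)]
    exact neg_ne_zero.2 (div_ne_zero (pow_ne_zero _ (one_sub_pow_ne_zero hx (by omega)))
      (pow_ne_zero _ hx0))
  have hexp := prod_sub_div_prod_sub_eq_sum (s := Finset.range (N + 1)) (t := Finset.range N)
    (fun k ↦ joukowski (x ^ (2 * k + 2))) hinj (by simp) fun m _ ↦ hnode m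
  rw [prod_two_sub_joukowski_div_prod hx0 hx] at hexp
  refine mul_left_cancel₀ (neg_ne_zero.2 (pow_ne_zero (N + 1) hx0)) ?_
  rw [neg_mul _ (1 / _), mul_one_div, hexp, Finset.mul_sum]
  refine Finset.sum_congr rfl fun m hm ↦ ?_
  obtain ⟨r, rfl⟩ := Nat.exists_eq_add_of_le (Finset.mem_range_succ_iff.1 hm)
  rw [prod_joukowski_sub_div_prod_erase hx0 hx, two_sub_joukowski (pow_ne_zero _ hx0),
    Nat.add_sub_cancel_left, show m + r + m + 1 = 2 * m + 1 + r by ring]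
  have hm1 := one_sub_pow_ne_zero hx (n := 2 * m + 1) (by omega)
  field_simp
  ring

end FiniteIdentity

section Limit

open Filter Topology

lemma tendsto_sum_range_mul_mul {R : Type*} [NormedRing R] [CompleteSpace R] {c A B : ℕ → R}
    {a b : R} (hc : Summable fun m ↦ ‖c m‖) (hA : Tendsto A atTop (𝓝 a))
    (hB : Tendsto B atTop (𝓝 b)) :
    Tendsto (fun N ↦ ∑ m ∈ Finset.range (N + 1), c m * A (N - m) * B (N + m + 1)) atTop
      (𝓝 ((∑' m, c m) * a * b)) := by
  obtain ⟨C, hC⟩ := hA.norm.bddAbove_range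
  obtain ⟨D, hD⟩ := hB.norm.bddAbove_range
  rw [← (Summable.of_norm hc).tsum_mul_right, ← ((Summable.of_norm hc).mul_right a).tsum_mul_right]
  refine Tendsto.congr (fun N ↦ (sum_eq_tsum_indicator _ _).symm) ?_
  refine tendsto_tsum_of_dominated_convergence ((hc.mul_right C).mul_right D) (fun m ↦ ?_)
    (.of_forall fun N m ↦ ?_)
  · have hlim : Tendsto (fun N ↦ c m * A (N - m) * B (N + m + 1)) atTop (𝓝 (c m * a * b)) :=
      ((hA.comp (tendsto_sub_atTop_nat m)).const_mul _).mul
        (hB.comp (tendsto_add_atTop_nat (m + 1)))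
    refine hlim.congr' ?_
    filter_upwards [eventually_ge_atTop m] with N hN
    rw [Set.indicator_of_mem (by simpa using Nat.lt_succ_of_le hN)]
  · have hC0 : 0 ≤ C := (norm_nonneg _).trans (hC ⟨0, rfl⟩)
    refine (norm_indicator_le_norm_self _ _).trans ?_
    calc ‖c m * A (N - m) * B (N + m + 1)‖
        ≤ ‖c m‖ * ‖A (N - m)‖ * ‖B (N + m + 1)‖ := norm_mul₃_le
      _ ≤ ‖c m‖ * C * D := by
        gcongr
        exacts [hC ⟨_, rfl⟩, hD ⟨_, rfl⟩]

variable {𝕜 : Type*} [NormedField 𝕜] {x : 𝕜}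

/-- Euler's function `φ(q) = ∏_{n≥1} (1 - qⁿ)`, the infinite product in `dedekindEta`. -/
def eulerFunction (q : 𝕜) : 𝕜 := ∏' n : ℕ, (1 - q ^ (n + 1))

lemma summable_norm_neg_pow_succ (hx : ‖x‖ < 1) :
    Summable fun n : ℕ ↦ ‖-x ^ (n + 1)‖ := by
  simp only [norm_neg, norm_pow]
  exact (summable_nat_add_iff 1).2 (summable_geometric_of_lt_one (norm_nonneg x) hx)

lemma not_isOfFinOrder_of_norm_lt_one (hx : ‖x‖ < 1) : ¬IsOfFinOrder x :=
  fun h ↦ hx.ne h.norm_eq_one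

lemma norm_pow_lt_one (hx : ‖x‖ < 1) {n : ℕ} (hn : n ≠ 0) : ‖x ^ n‖ < 1 := by
  rw [norm_pow]
  exact pow_lt_one₀ (norm_nonneg x) hx hn

lemma tendsto_pow_two_mul_add_one (hx : ‖x‖ < 1) :
    Tendsto (fun n : ℕ ↦ x ^ (2 * n + 1)) atTop (𝓝 0) :=
  (tendsto_pow_atTop_nhds_zero_of_norm_lt_one hx).comp
    (tendsto_atTop_mono (fun n : ℕ ↦ (by omega : n ≤ 2 * n + 1)) tendsto_id)

lemma summable_norm_pow_mul_div (hx : ‖x‖ < 1) :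
    Summable fun m : ℕ ↦ ‖x ^ m * (1 + x ^ (2 * m + 1)) / (1 - x ^ (2 * m + 1)) ^ 2‖ := by
  have hlim : Tendsto (fun m : ℕ ↦ ‖(1 + x ^ (2 * m + 1)) / (1 - x ^ (2 * m + 1)) ^ 2‖) atTop
      (𝓝 ‖(1 + 0 : 𝕜) / (1 - 0) ^ 2‖) :=
    (((tendsto_pow_two_mul_add_one hx).const_add 1).div
      (((tendsto_pow_two_mul_add_one hx).const_sub 1).pow 2) (by simp)).norm
  simp only [mul_div_assoc, norm_mul, norm_pow]
  refine Summable.mul_tendsto_const ?_ (Nat.cofinite_eq_atTop ▸ hlim)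
  simpa using summable_geometric_of_lt_one (norm_nonneg x) hx

variable [CompleteSpace 𝕜]

lemma eulerFunction_ne_zero (hx : ‖x‖ < 1) : eulerFunction x ≠ 0 := by
  simp only [eulerFunction, sub_eq_add_neg]
  refine tprod_one_add_ne_zero_of_summable (fun n ↦ ?_) (summable_norm_neg_pow_succ hx)
  rw [← sub_eq_add_neg]
  exact one_sub_pow_ne_zero (not_isOfFinOrder_of_norm_lt_one hx) n.succ_ne_zero

lemma tendsto_prod_eulerFunction (hx : ‖x‖ < 1) :
    Tendsto (fun n ↦ ∏ i ∈ Finset.range n, (1 - x ^ (i + 1))) atTop (𝓝 (eulerFunction x)) := by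
  simp only [eulerFunction, sub_eq_add_neg]
  exact (multipliable_one_add_of_summable
    (f := fun n ↦ -x ^ (n + 1)) (summable_norm_neg_pow_succ hx)).tendsto_prod_tprod_nat

lemma tendsto_pochhammerRatio (hx : ‖x‖ < 1) :
    Tendsto (pochhammerRatio x) atTop (𝓝 (eulerFunction x / eulerFunction (x ^ 2) ^ 2)) := by
  have hx2 : ‖x ^ 2‖ < 1 := norm_pow_lt_one hx two_ne_zero
  refine Tendsto.congr (fun n ↦ (pochhammerRatio_eq_div
    (not_isOfFinOrder_of_norm_lt_one hx) n).symm) ?_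
  have hnum := (tendsto_prod_eulerFunction hx).comp (tendsto_id.const_mul_atTop' two_pos)
  have hden := (tendsto_prod_eulerFunction hx2).pow 2
  exact hnum.div hden (pow_ne_zero 2 (eulerFunction_ne_zero hx2))

theorem tsum_pow_mul_div_eq_eulerFunction (hx : ‖x‖ < 1) :
    ∑' m : ℕ, x ^ m * (1 + x ^ (2 * m + 1)) / (1 - x ^ (2 * m + 1)) ^ 2 =
      eulerFunction (x ^ 2) ^ 8 / eulerFunction x ^ 4 := by
  have hx2 : ‖x ^ 2‖ < 1 := norm_pow_lt_one hx two_ne_zero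
  have hφ := eulerFunction_ne_zero hx
  have hφ2 := eulerFunction_ne_zero hx2
  set a := eulerFunction x / eulerFunction (x ^ 2) ^ 2 with ha
  have ha0 : a ≠ 0 := div_ne_zero hφ (pow_ne_zero 2 hφ2)
  have hA : Tendsto (pochhammerRatio x) atTop (𝓝 a) := tendsto_pochhammerRatio hx
  have hleft := tendsto_sum_range_mul_mul
    (c := fun m ↦ x ^ m * (1 + x ^ (2 * m + 1)) / (1 - x ^ (2 * m + 1)) ^ 2)
    (summable_norm_pow_mul_div hx) hA hA
  have hright : Tendsto (fun N ↦ 1 / (pochhammerRatio x N * (1 - x ^ (2 * N + 1))) ^ 2) atTop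
      (𝓝 (1 / (a * (1 - 0)) ^ 2)) :=
    tendsto_const_nhds.div
      ((hA.mul ((tendsto_pow_two_mul_add_one hx).const_sub 1)).pow 2) (by simpa using ha0)
  simp only [sum_mul_pochhammerRatio_mul_pochhammerRatio (not_isOfFinOrder_of_norm_lt_one hx)]
    at hleft
  have hlim := tendsto_nhds_unique hleft hright
  rw [sub_zero, mul_one, mul_assoc, ← sq, ← eq_div_iff (pow_ne_zero 2 ha0)] at hlim
  rw [hlim, ha]
  field_simp

end Limit

section Lambert

lemma sum_divisors_mul_pow {R : Type*} [CommSemiring R] (q : R) (n : ℕ) :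
    ((∑ d ∈ n.divisors, d : ℕ) : R) * q ^ n =
      ∑ p ∈ n.divisorsAntidiagonal, (p.2 : R) * q ^ (p.1 * p.2) := by
  rw [← Nat.sum_divisorsAntidiagonal' (fun _ d ↦ d), Nat.cast_sum, Finset.sum_mul]
  exact Finset.sum_congr rfl fun p hp ↦ by rw [(Nat.mem_divisorsAntidiagonal.1 hp).1]

/-- The factorisations `a * b = 2 * n + 1` of all odd numbers, enumerated by pairs `(m, k)` with
`a = 2 * m + 1` and `b = 2 * k + 1`; it reindexes the sum over `n` and its divisors as a double
series. -/
def sigmaDivisorsAntidiagonalOddEquiv :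
    (Σ n : ℕ, (2 * n + 1).divisorsAntidiagonal) ≃ ℕ × ℕ where
  toFun p := (p.2.1.1 / 2, p.2.1.2 / 2)
  invFun p := ⟨2 * p.1 * p.2 + p.1 + p.2, (2 * p.1 + 1, 2 * p.2 + 1),
    Nat.mem_divisorsAntidiagonal.2 ⟨by ring, by omega⟩⟩
  left_inv := by
    rintro ⟨n, ⟨a, b⟩, hab⟩
    have hmul : a * b = 2 * n + 1 := (Nat.mem_divisorsAntidiagonal.1 hab).1
    obtain ⟨⟨m, rfl⟩, k, rfl⟩ := Nat.odd_mul.1 (hmul ▸ odd_two_mul_add_one n)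
    have hm : (2 * m + 1) / 2 = m := by omega
    have hk : (2 * k + 1) / 2 = k := by omega
    refine Sigma.subtype_ext ?_ ?_ <;> simp only [hm, hk]
    linarith
  right_inv p :=
    Prod.ext (by omega : (2 * p.1 + 1) / 2 = p.1) (by omega : (2 * p.2 + 1) / 2 = p.2)

variable {𝕜 : Type*} [NormedField 𝕜] {q : 𝕜}

lemma hasSum_odd_mul_pow_odd (hq : ‖q‖ < 1) :
    HasSum (fun k : ℕ ↦ ((2 * k + 1 : ℕ) : 𝕜) * q ^ (2 * k + 1))
      (q * (1 + q ^ 2) / (1 - q ^ 2) ^ 2) := by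
  have hq2 : ‖q ^ 2‖ < 1 := norm_pow_lt_one hq two_ne_zero
  have hne := one_sub_pow_ne_zero (not_isOfFinOrder_of_norm_lt_one hq) two_ne_zero
  have hsum := (((hasSum_coe_mul_geometric_of_norm_lt_one hq2).mul_left 2).add
    (hasSum_geometric_of_norm_lt_one hq2)).mul_left q
  have hterm (k : ℕ) : ((2 * k + 1 : ℕ) : 𝕜) * q ^ (2 * k + 1) =
      q * (2 * (k * (q ^ 2) ^ k) + (q ^ 2) ^ k) := by
    push_cast
    ring
  have hval : q * (1 + q ^ 2) / (1 - q ^ 2) ^ 2 =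
      q * (2 * (q ^ 2 / (1 - q ^ 2) ^ 2) + (1 - q ^ 2)⁻¹) := by
    field_simp
    ring
  simpa only [hterm, hval] using hsum

variable [CompleteSpace 𝕜]

lemma summable_odd_mul_pow_odd_mul_odd (hq : ‖q‖ < 1) :
    Summable fun p : ℕ × ℕ ↦ ((2 * p.2 + 1 : ℕ) : 𝕜) * q ^ ((2 * p.1 + 1) * (2 * p.2 + 1)) := by
  have hodd : Function.Injective fun n : ℕ ↦ (2 * n).succPNat :=
    Nat.succPNat_injective.comp (mul_right_injective₀ two_ne_zero)
  have hsum := (summable_prod_mul_pow 1 (r := ‖q‖) (by simpa using hq)).comp_injective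
    (hodd.prodMap hodd)
  refine Summable.of_norm_bounded hsum fun p ↦ ?_
  rw [norm_mul, norm_pow]
  simpa [Prod.map, Function.comp] using
    mul_le_mul_of_nonneg_right (Nat.norm_cast_le (α := 𝕜) (2 * p.2 + 1))
      (pow_nonneg (norm_nonneg q) ((2 * p.1 + 1) * (2 * p.2 + 1)))

theorem tsum_sum_divisors_odd_mul_pow (hq : ‖q‖ < 1) :
    ∑' n : ℕ, ((∑ d ∈ (2 * n + 1).divisors, d : ℕ) : 𝕜) * q ^ (2 * n + 1) =
      ∑' m : ℕ, q ^ (2 * m + 1) * (1 + q ^ (2 * (2 * m + 1))) /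
        (1 - q ^ (2 * (2 * m + 1))) ^ 2 := by
  let f (p : ℕ × ℕ) : 𝕜 := p.2 * q ^ (p.1 * p.2)
  let e := sigmaDivisorsAntidiagonalOddEquiv
  have hodd : Summable fun p : ℕ × ℕ ↦ f (2 * p.1 + 1, 2 * p.2 + 1) :=
    summable_odd_mul_pow_odd_mul_odd hq
  have hsigma : Summable fun s : Σ n : ℕ, (2 * n + 1).divisorsAntidiagonal ↦ f s.2 :=
    e.symm.summable_iff.1 hodd
  calc ∑' n : ℕ, ((∑ d ∈ (2 * n + 1).divisors, d : ℕ) : 𝕜) * q ^ (2 * n + 1)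
      = ∑' (n : ℕ) (p : (2 * n + 1).divisorsAntidiagonal), f p :=
        tsum_congr fun n ↦ (sum_divisors_mul_pow q _).trans (Finset.tsum_subtype _ f).symm
    _ = ∑' s : Σ n : ℕ, (2 * n + 1).divisorsAntidiagonal, f s.2 := hsigma.tsum_sigma.symm
    _ = ∑' p : ℕ × ℕ, f (2 * p.1 + 1, 2 * p.2 + 1) := (e.symm.tsum_eq _).symm
    _ = ∑' (m : ℕ) (k : ℕ), f (2 * m + 1, 2 * k + 1) := hodd.tsum_prod
    _ = _ := by
        refine tsum_congr fun m ↦ ?_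
        have hsum := hasSum_odd_mul_pow_odd (norm_pow_lt_one hq (n := 2 * m + 1) (by omega))
        simpa only [← pow_mul, mul_comm _ 2] using hsum.tsum_eq

end Lambert

section EtaQuotient

theorem tsum_sum_divisors_odd_mul_pow_eq_eulerFunction {𝕜 : Type*} [NormedField 𝕜]
    [CompleteSpace 𝕜] {q : 𝕜} (hq : ‖q‖ < 1) :
    ∑' n : ℕ, ((∑ d ∈ (2 * n + 1).divisors, d : ℕ) : 𝕜) * q ^ (2 * n + 1) =
      q * (eulerFunction (q ^ 4) ^ 8 / eulerFunction (q ^ 2) ^ 4) := by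
  have hseries := tsum_pow_mul_div_eq_eulerFunction (norm_pow_lt_one hq two_ne_zero)
  rw [← pow_mul] at hseries
  rw [tsum_sum_divisors_odd_mul_pow hq, ← hseries, ← tsum_mul_left]
  refine tsum_congr fun m ↦ ?_
  ring

lemma norm_nome_lt_one {τ : ℂ} (hτ : 0 < τ.im) : ‖nome τ‖ < 1 :=
  UpperHalfPlane.norm_exp_two_pi_I_lt_one ⟨τ, hτ⟩

lemma nome_natCast_mul (n : ℕ) (τ : ℂ) : nome (n * τ) = nome τ ^ n := by
  rw [nome, nome, ← Complex.exp_nat_mul]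
  ring_nf

lemma dedekindEta_eq (τ : ℂ) :
    dedekindEta τ = Complex.exp ((π : ℂ) * I * τ / 12) * eulerFunction (nome τ) :=
  rfl

lemma exp_pow_eight_eq_nome_mul (τ : ℂ) :
    Complex.exp ((π : ℂ) * I * (4 * τ) / 12) ^ 8 =
      nome τ * Complex.exp ((π : ℂ) * I * (2 * τ) / 12) ^ 4 := by
  rw [nome, ← Complex.exp_nat_mul, ← Complex.exp_nat_mul, ← Complex.exp_add]
  push_cast
  ring_nf

end EtaQuotient

/-- For `τ ∈ ℍ`: `E_odd(τ) = η(4τ)⁸/η(2τ)⁴`. -/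
theorem stmt10 (τ : ℂ) (hτ : 0 < τ.im) :
    Eodd τ = dedekindEta (4 * τ) ^ 8 / dedekindEta (2 * τ) ^ 4 := by
  have hnome2 : nome (2 * τ) = nome τ ^ 2 := mod_cast nome_natCast_mul 2 τ
  have hnome4 : nome (4 * τ) = nome τ ^ 4 := mod_cast nome_natCast_mul 4 τ
  have hexp : Complex.exp ((π : ℂ) * I * (2 * τ) / 12) ^ 4 ≠ 0 :=
    pow_ne_zero 4 (Complex.exp_ne_zero _)
  calc Eodd τ = nome τ * (eulerFunction (nome τ ^ 4) ^ 8 / eulerFunction (nome τ ^ 2) ^ 4) :=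
        tsum_sum_divisors_odd_mul_pow_eq_eulerFunction (norm_nome_lt_one hτ)
    _ = nome τ * eulerFunction (nome τ ^ 4) ^ 8 / eulerFunction (nome τ ^ 2) ^ 4 :=
        (mul_div_assoc _ _ _).symm
    _ = dedekindEta (4 * τ) ^ 8 / dedekindEta (2 * τ) ^ 4 := by
        rw [← mul_div_mul_left _ _ hexp, dedekindEta_eq, dedekindEta_eq, hnome2, hnome4, mul_pow,
          mul_pow, exp_pow_eight_eq_nome_mul, mul_left_comm, ← mul_assoc (nome τ)]
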